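/- arXiv:2601.15604 — 2 statements merged into one kernel-verified Lean document; each statement's English description precedes it below -/
import Mathlib

section
/- Let n be a nonempty finite index type, let P : Matrix n n ℝ be a symmetric positive semidefinite matrix, let x : n → ℝ with xᵢ > 0 for all i, let C > 0, and let α ∈ ℝ. Then for every h in the scaled simplex S_C = {h : n → ℝ | hᵢ ≥ 0 for all i, ∑ᵢ hᵢ = C}, one has hᵀ P h − α · (hᵀ x) ≤ max_i (C² · Pᵢᵢ − α · C · xᵢ), where the maximum is over all indices i ∈ n; that is, the parametric objective of the fractional program is bounded on S_C by its maximum value over the scaled standard basis vectors C • e_i. -/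
open Matrix

/-! Evaluating the form of a positive semidefinite `P` at `eᵢ - eⱼ` gives
`Pᵢⱼ + Pⱼᵢ ≤ Pᵢᵢ + Pⱼⱼ`. Multiplying by `hᵢ hⱼ` and summing bounds `hᵀ P h` by `C ∑ᵢ hᵢ Pᵢᵢ`,
which is linear in `h`. Hence `C` times the objective is at most `∑ᵢ hᵢ (C² Pᵢᵢ - α C xᵢ)`, a sum
with weights of total `C`, and so at most `C` times the largest of the
values `C² Pᵢᵢ - α C xᵢ`. -/

theorem apply_add_apply_swap_le_of_posSemidef {n R : Type*} [Ring R] [PartialOrder R]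
    [AddLeftMono R] [StarRing R] {P : Matrix n n R} (hP : P.PosSemidef) (i j : n) :
    P i j + P j i ≤ P i i + P j j := by
  have form_nonneg := (hP.submatrix ![i, j]).dotProduct_mulVec_nonneg ![1, -1]
  simp only [dotProduct, mulVec, Fin.sum_univ_two, submatrix_apply, Pi.star_apply, cons_val_zero,
    cons_val_one, star_one, star_neg, one_mul, mul_one, neg_mul, mul_neg] at form_nonneg
  rw [← sub_nonneg]
  convert form_nonneg using 1
  abel

theorem sum_mul_le_sum_mul_sup' {ι R : Type*} [Semiring R] [LinearOrder R] [IsOrderedRing R]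
    {s : Finset ι} (hs : s.Nonempty) {w : ι → R} (hw : ∀ i ∈ s, 0 ≤ w i) (f : ι → R) :
    ∑ i ∈ s, w i * f i ≤ (∑ i ∈ s, w i) * s.sup' hs f := by
  rw [Finset.sum_mul]
  exact Finset.sum_le_sum fun i hi => mul_le_mul_of_nonneg_left (Finset.le_sup' f hi) (hw i hi)

section LinearOrderedCommRing

variable {n R : Type*} [Fintype n] [CommRing R] [LinearOrder R] [IsStrictOrderedRing R]

theorem dotProduct_mulVec_le_of_add_transpose_le {A B : Matrix n n R}
    (hAB : ∀ i j, (A + Aᵀ) i j ≤ (B + Bᵀ) i j) {h : n → R} (h_nonneg : 0 ≤ h) :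
    h ⬝ᵥ A *ᵥ h ≤ h ⬝ᵥ B *ᵥ h := by
  have form_symmetrize (M : Matrix n n R) : h ⬝ᵥ (M + Mᵀ) *ᵥ h = 2 * (h ⬝ᵥ M *ᵥ h) := by
    rw [add_mulVec, dotProduct_add, mulVec_transpose, dotProduct_comm h (h ᵥ* M),
      ← dotProduct_mulVec, two_mul]
  refine le_of_mul_le_mul_left ?_ (zero_lt_two' R)
  rw [← form_symmetrize, ← form_symmetrize]
  exact dotProduct_le_dotProduct_of_nonneg_left
    (fun i => dotProduct_le_dotProduct_of_nonneg_right (hAB i) h_nonneg) h_nonneg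

theorem dotProduct_mulVec_le_sum_mul_dotProduct_diag {P : Matrix n n R}
    (hP : ∀ i j, P i j + P j i ≤ P i i + P j j) {h : n → R} (h_nonneg : 0 ≤ h) :
    h ⬝ᵥ P *ᵥ h ≤ (∑ i, h i) * (h ⬝ᵥ P.diag) := by
  calc h ⬝ᵥ P *ᵥ h
      ≤ h ⬝ᵥ vecMulVec P.diag 1 *ᵥ h :=
        dotProduct_mulVec_le_of_add_transpose_le
          (fun i j => by simpa [vecMulVec_apply] using hP i j) h_nonneg
    _ = (∑ i, h i) * (h ⬝ᵥ P.diag) := by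
        rw [vecMulVec_mulVec, one_dotProduct, op_smul_eq_smul, dotProduct_smul, smul_eq_mul]

theorem stmt_6_general [Nonempty n] {P : Matrix n n R}
    (hP : ∀ i j, P i j + P j i ≤ P i i + P j j) (x : n → R) (C α : R) :
    ∀ h ∈ {h : n → R | (∀ i, 0 ≤ h i) ∧ ∑ i, h i = C},
      h ⬝ᵥ P *ᵥ h - α * (h ⬝ᵥ x) ≤
        Finset.univ.sup' Finset.univ_nonempty
          (fun i : n => C ^ 2 * P i i - α * C * x i) := by
  rintro h ⟨h_nonneg, h_sum⟩
  obtain C_zero | C_pos := (h_sum ▸ Fintype.sum_nonneg h_nonneg : 0 ≤ C).eq_or_lt'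
  · have h_zero : h = 0 := (Fintype.sum_eq_zero_iff_of_nonneg h_nonneg).mp (h_sum.trans C_zero)
    simp [C_zero, h_zero]
  · refine le_of_mul_le_mul_left ?_ C_pos
    calc C * (h ⬝ᵥ P *ᵥ h - α * (h ⬝ᵥ x))
        ≤ C * (C * (h ⬝ᵥ P.diag) - α * (h ⬝ᵥ x)) := by
          gcongr
          exact h_sum ▸ dotProduct_mulVec_le_sum_mul_dotProduct_diag hP h_nonneg
      _ = ∑ i, h i * (C ^ 2 * P i i - α * C * x i) := by
          simp only [dotProduct, diag_apply, Finset.mul_sum, ← Finset.sum_sub_distrib]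
          exact Finset.sum_congr rfl fun i _ => by ring
      _ ≤ C * Finset.univ.sup' Finset.univ_nonempty fun i => C ^ 2 * P i i - α * C * x i :=
          h_sum ▸ sum_mul_le_sum_mul_sup' _ (fun i _ => h_nonneg i) _

end LinearOrderedCommRing

/-- On the scaled simplex, the parametric objective of the fractional program is
bounded by its maximum value over the scaled standard basis vectors. -/
theorem stmt_6 {n : Type*} [Fintype n] [DecidableEq n] [Nonempty n]
    (P : Matrix n n ℝ) (hP : P.PosSemidef) (x : n → ℝ) (hx : ∀ i, 0 < x i)
    (C : ℝ) (hC : 0 < C) (α : ℝ) :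
    ∀ h ∈ {h : n → ℝ | (∀ i, 0 ≤ h i) ∧ ∑ i, h i = C},
      h ⬝ᵥ P.mulVec h - α * (h ⬝ᵥ x) ≤
        Finset.univ.sup' Finset.univ_nonempty
          (fun i : n => C ^ 2 * P i i - α * C * x i) :=
  stmt_6_general (apply_add_apply_swap_le_of_posSemidef hP) x C α
end

section
/- Let n be a finite index type, let P : Matrix n n ℝ be a symmetric positive semidefinite matrix, let h : n → ℝ, let β ∈ ℝ, and let R > 0. Define K = (β / (β² · hᵀ P h + R)) • (P h) and the posterior covariance P' = (I − β • (K hᵀ)) * P. Then Tr(P') ≤ Tr(P); that is, each measurement never increases the mean Cramér–Rao bound. -/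
open Matrix

/-!
In the Loewner order the measurement subtracts from `P` a nonnegative multiple of a rank-one
positive semidefinite matrix: with `S = |β|² hᴴ P h + R`,
`P - P' = (|β|² / S) • (P h) (P h)ᴴ`. Taking traces gives the bound.
-/

theorem inv_nonneg_of_starOrderedRing {𝕜 : Type*} [DivisionSemiring 𝕜] [StarRing 𝕜]
    [PartialOrder 𝕜] [StarOrderedRing 𝕜] {a : 𝕜} (ha : 0 ≤ a) : 0 ≤ a⁻¹ := by
  have star_inv_self : star a⁻¹ = a⁻¹ := by rw [star_inv₀, ha.isSelfAdjoint.star_eq]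
  calc
    0 ≤ star a⁻¹ * a * a⁻¹ := star_left_conjugate_nonneg ha a⁻¹
    _ = a⁻¹ := by simpa only [star_inv_self, inv_inv] using mul_inv_mul_cancel a⁻¹

section KalmanUpdate

variable {n 𝕜 : Type*} [Fintype n] [Field 𝕜] [StarRing 𝕜]

/-- The variance `S = |β|² hᴴ P h + R` of the scalar measurement `y = β hᴴ x + ε`, where the state
`x` has covariance `P` and the noise `ε` has variance `R`. -/
def innovationVariance (P : Matrix n n 𝕜) (h : n → 𝕜) (β R : 𝕜) : 𝕜 :=
  star β * β * (star h ⬝ᵥ P *ᵥ h) + R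

/-- The Kalman gain `K = P Hᴴ S⁻¹` of the measurement `y = H x + ε` with `H = β hᴴ`. It takes the
junk value `0` when the innovation variance `S` vanishes. -/
def kalmanGain (P : Matrix n n 𝕜) (h : n → 𝕜) (β R : 𝕜) : n → 𝕜 :=
  (star β / innovationVariance P h β R) • P *ᵥ h

/-- The covariance `P' = (I - K H) P` of the state after the measurement `y = H x + ε` with
`H = β hᴴ`, where `K` is the Kalman gain. -/
def posteriorCovariance [DecidableEq n] (P : Matrix n n 𝕜) (h : n → 𝕜) (β R : 𝕜) : Matrix n n 𝕜 :=
  (1 - β • vecMulVec (kalmanGain P h β R) (star h)) * P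

variable {P : Matrix n n 𝕜} {h : n → 𝕜} {β R : 𝕜}

theorem sub_posteriorCovariance [DecidableEq n] (hP : P.IsHermitian) :
    P - posteriorCovariance P h β R =
      (star β * β / innovationVariance P h β R) • vecMulVec (P *ᵥ h) (star (P *ᵥ h)) := by
  have star_vecMul_eq : star h ᵥ* P = star (P *ᵥ h) := by rw [star_mulVec, hP.eq]
  calc
    P - posteriorCovariance P h β R = β • vecMulVec (kalmanGain P h β R) (star h) * P := by
      rw [posteriorCovariance, sub_mul, one_mul, sub_sub_cancel]
    _ = (β * (star β / innovationVariance P h β R)) •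
          vecMulVec (P *ᵥ h) (star (P *ᵥ h)) := by
      rw [smul_mul_assoc, vecMulVec_mul, star_vecMul_eq, kalmanGain, smul_vecMulVec, smul_smul]
    _ = _ := by rw [mul_div_assoc', mul_comm β]

variable [PartialOrder 𝕜] [StarOrderedRing 𝕜]

theorem innovationVariance_pos (hP : P.PosSemidef) (hR : 0 < R) :
    0 < innovationVariance P h β R :=
  add_pos_of_nonneg_of_pos
    (mul_nonneg (star_mul_self_nonneg β) (hP.dotProduct_mulVec_nonneg h)) hR

theorem stmt_10_general [DecidableEq n] (hP : P.IsHermitian)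
    (hS : 0 < innovationVariance P h β R) :
    (P - posteriorCovariance P h β R).PosSemidef := by
  have coeff_nonneg : 0 ≤ star β * β / innovationVariance P h β R := by
    rw [div_eq_mul_inv]
    exact mul_nonneg (star_mul_self_nonneg β) (inv_nonneg_of_starOrderedRing hS.le)
  rw [sub_posteriorCovariance hP]
  exact (posSemidef_vecMulVec_self_star (P *ᵥ h)).smul coeff_nonneg

end KalmanUpdate

/-- Each measurement never increases the mean Cramér–Rao bound:
`Tr P' ≤ Tr P`. -/
theorem stmt_10 {n : Type*} [Fintype n] [DecidableEq n]
    (P : Matrix n n ℝ) (hP : P.PosSemidef) (h : n → ℝ) (β : ℝ) (R : ℝ)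
    (hR : 0 < R) :
    (((1 : Matrix n n ℝ) -
          β • vecMulVec ((β / (β ^ 2 * (h ⬝ᵥ P.mulVec h) + R)) • P.mulVec h) h)
        * P).trace ≤ P.trace := by
  have trace_sub_nonneg := (stmt_10_general (β := β) hP.isHermitian
    (innovationVariance_pos (h := h) hP hR)).trace_nonneg
  simpa only [posteriorCovariance, kalmanGain, innovationVariance, star_trivial, ← sq,
    trace_sub, sub_nonneg] using trace_sub_nonneg
end
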